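/- arXiv:1711.07296 — 5 statements merged into one kernel-verified Lean document; each statement's English description precedes it below -/
import Mathlib

section
/- A nonzero polynomial f ∈ ℂ[z₁,…,zₙ] is K-stable if and only if for all x, y ∈ ℝⁿ with y in the interior of K, the univariate polynomial t ↦ f(x + t·y) is stable (has no roots with positive imaginary part). -/
/-- A polynomial `f ∈ ℂ[z₁,…,zₙ]` is `K`-stable if `f(z) ≠ 0` whenever the vector of
imaginary parts of `z` lies in the interior of `K`. -/
def KStable {n : ℕ} (K : Set (Fin n → ℝ)) (f : MvPolynomial (Fin n) ℂ) : Prop :=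
  ∀ z : Fin n → ℂ, (fun j => (z j).im) ∈ interior K → MvPolynomial.eval z f ≠ 0

open scoped Pointwise in
lemma interior_cone_smul {n : ℕ} (K : Set (Fin n → ℝ))
    (hKcone : ∀ (c : ℝ), 0 ≤ c → ∀ x ∈ K, c • x ∈ K)
    (c : ℝ) (hc : 0 < c) (y : Fin n → ℝ) (hy : y ∈ interior K) : c • y ∈ interior K := by
  have h1 : c • y ∈ c • interior K := Set.smul_mem_smul_set hy
  rw [← interior_smul₀ hc.ne'] at h1
  refine interior_mono ?_ h1
  rintro _ ⟨w, hw, rfl⟩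
  exact hKcone _ hc.le w hw

/-- A nonzero polynomial `f` is `K`-stable iff for all `x, y ∈ ℝⁿ` with `y ∈ int K`,
the univariate polynomial `t ↦ f(x + t y)` is stable (no root with positive imaginary part). -/
theorem stmt0 {n : ℕ} (K : Set (Fin n → ℝ))
    (hKcl : IsClosed K) (hKconv : Convex ℝ K)
    (hKcone : ∀ (c : ℝ), 0 ≤ c → ∀ x ∈ K, c • x ∈ K)
    (hKpointed : K ∩ (-K) ⊆ {0}) (hKfull : (interior K).Nonempty)
    (f : MvPolynomial (Fin n) ℂ) (hf : f ≠ 0) :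
    KStable K f ↔
      ∀ x y : Fin n → ℝ, y ∈ interior K →
        ∀ t : ℂ, 0 < t.im →
          MvPolynomial.eval (fun j => (x j : ℂ) + t * (y j : ℂ)) f ≠ 0 := by
  constructor
  · intro h x y hy t ht
    apply h
    have e : (fun j => ((x j : ℂ) + t * (y j : ℂ)).im) = t.im • y := by
      funext j
      simp
    rw [e]
    exact interior_cone_smul K hKcone _ ht y hy
  · intro h z hz
    have h1 := h (fun j => (z j).re) (fun j => (z j).im) hz Complex.I (by simp)
    have e : (fun j => ((z j).re : ℂ) + Complex.I * ((z j).im : ℂ)) = z := by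
      funext j
      rw [mul_comm]
      exact Complex.re_add_im (z j)
    simpa only [e] using h1
end

section
/- If a polynomial f ∈ ℂ[z₁,…,zₙ] is K-stable for a non-convex cone K with non-empty connected interior, then f is stable with respect to the cone cl(conv(int K)). -/
open Topology Filter

/-- A Hurwitz-type lemma, proved by the minimum modulus principle. -/
lemma hurwitz_aux {X : Type*} [TopologicalSpace X] (G : X → ℂ → ℂ)
    (hc : Continuous (fun p : X × ℂ => G p.1 p.2))
    (hd : ∀ x, Differentiable ℂ (G x)) (x0 : X) (R : ℝ) (hR : 0 < R)
    (hs : ∀ w ∈ Metric.sphere (0 : ℂ) R, G x0 w ≠ 0)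
    (hx : x0 ∈ closure {x | ∀ w ∈ Metric.closedBall (0 : ℂ) R, G x w ≠ 0}) :
    ∀ w ∈ Metric.closedBall (0 : ℂ) R, G x0 w ≠ 0 := by
  have hcx : ∀ x, Continuous (G x) := fun x => (hd x).continuous
  obtain ⟨δ, hδ, hδs⟩ : ∃ δ : ℝ, 0 < δ ∧ ∀ w ∈ Metric.sphere (0 : ℂ) R, δ < ‖G x0 w‖ := by
    have hne : (Metric.sphere (0 : ℂ) R).Nonempty := NormedSpace.sphere_nonempty.2 hR.le
    obtain ⟨w0, hw0, hmin⟩ := (isCompact_sphere (0 : ℂ) R).exists_isMinOn hne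
      (hcx x0).norm.continuousOn
    have h0 : 0 < ‖G x0 w0‖ := norm_pos_iff.2 (hs w0 hw0)
    refine ⟨‖G x0 w0‖ / 2, by positivity, fun w hw => ?_⟩
    have := hmin hw
    simp only [Set.mem_setOf_eq] at this
    linarith
  have hev : ∀ᶠ x in 𝓝 x0, ∀ w ∈ Metric.sphere (0 : ℂ) R, δ < ‖G x w‖ := by
    apply (isCompact_sphere (0 : ℂ) R).eventually_forall_of_forall_eventually
    intro w hw
    exact (hc.norm.continuousAt (x := (x0, w))).eventually (lt_mem_nhds (hδs w hw))
  intro w hw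
  have hfr : ∃ᶠ x in 𝓝 x0, δ ≤ ‖G x w‖ := by
    refine ((mem_closure_iff_frequently.1 hx).and_eventually hev).mono ?_
    rintro x ⟨h1, h2⟩
    have hcl : closure (Metric.ball (0 : ℂ) R) = Metric.closedBall 0 R :=
      closure_ball _ hR.ne'
    have h3 : ‖(G x w)⁻¹‖ ≤ δ⁻¹ := by
      refine Complex.norm_le_of_forall_mem_frontier_norm_le (f := fun w => (G x w)⁻¹)
        (U := Metric.ball (0 : ℂ) R) Metric.isBounded_ball ?_ ?_ ?_
      · refine DiffContOnCl.inv (hd x).diffContOnCl ?_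
        rw [hcl]; exact h1
      · rw [frontier_ball _ hR.ne']
        intro z hz
        rw [norm_inv]
        exact inv_anti₀ hδ (h2 z hz).le
      · rw [hcl]; exact hw
    rw [norm_inv] at h3
    exact (inv_le_inv₀ (norm_pos_iff.2 (h1 w hw)) hδ).1 h3
  have hclosed : IsClosed {x | δ ≤ ‖G x w‖} := by
    apply isClosed_le continuous_const
    exact (hc.comp (by fun_prop : Continuous fun x : X => (x, w))).norm
  have : x0 ∈ {x | δ ≤ ‖G x w‖} := by
    rw [← hclosed.closure_eq]
    exact mem_closure_iff_frequently.2 hfr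
  exact norm_pos_iff.1 (hδ.trans_le this)

/-- Homogenization of `f`, as a function. -/
noncomputable def homF {n : ℕ} (f : MvPolynomial (Fin n) ℂ) (s : ℂ) (z : Fin n → ℂ) : ℂ :=
  ∑ j ∈ Finset.range (f.totalDegree + 1),
    s ^ (f.totalDegree - j) * MvPolynomial.eval z (MvPolynomial.homogeneousComponent j f)

lemma homF_one {n : ℕ} (f : MvPolynomial (Fin n) ℂ) (z : Fin n → ℂ) :
    homF f 1 z = MvPolynomial.eval z f := by
  conv_rhs => rw [← MvPolynomial.sum_homogeneousComponent f]
  simp [homF]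

lemma homF_zero {n : ℕ} (f : MvPolynomial (Fin n) ℂ) (z : Fin n → ℂ) :
    homF f 0 z = MvPolynomial.eval z (MvPolynomial.homogeneousComponent f.totalDegree f) := by
  unfold homF
  rw [Finset.sum_range_succ, Finset.sum_eq_zero]
  · simp
  · intro j hj
    have := Finset.mem_range.1 hj
    rw [zero_pow (by omega), zero_mul]

lemma eval_smul_hom {n : ℕ} (p : MvPolynomial (Fin n) ℂ) (j : ℕ) (hp : p.IsHomogeneous j)
    (c : ℂ) (z : Fin n → ℂ) :
    MvPolynomial.eval (c • z) p = c ^ j * MvPolynomial.eval z p := by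
  rw [MvPolynomial.eval_eq, MvPolynomial.eval_eq, Finset.mul_sum]
  refine Finset.sum_congr rfl fun m hm => ?_
  have h1 : m.degree = j := by
    by_contra h
    exact MvPolynomial.mem_support_iff.1 hm (hp.coeff_eq_zero h)
  have h2 : ∏ i ∈ m.support, c ^ m i = c ^ j := by
    rw [Finset.prod_pow_eq_pow_sum, ← h1]; rfl
  simp only [Pi.smul_apply, smul_eq_mul, mul_pow, Finset.prod_mul_distrib, h2]
  ring

lemma homF_smul {n : ℕ} (f : MvPolynomial (Fin n) ℂ) (s : ℂ) (z : Fin n → ℂ) :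
    homF f s (s • z) = s ^ f.totalDegree * MvPolynomial.eval z f := by
  rw [← homF_one, homF, homF, Finset.mul_sum]
  refine Finset.sum_congr rfl fun j hj => ?_
  have := Finset.mem_range.1 hj
  rw [eval_smul_hom _ j (MvPolynomial.homogeneousComponent_isHomogeneous j f), one_pow, one_mul,
    ← mul_assoc, ← pow_add, Nat.sub_add_cancel (by omega)]

lemma homF_ne {n : ℕ} (f : MvPolynomial (Fin n) ℂ) (s : ℂ) (hs : s ≠ 0) (z u : Fin n → ℂ)
    (hu : u = s • z) (h : MvPolynomial.eval z f ≠ 0) : homF f s u ≠ 0 := by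
  rw [hu, homF_smul]
  exact mul_ne_zero (pow_ne_zero _ hs) h

lemma homF_cont {n : ℕ} (f : MvPolynomial (Fin n) ℂ) {X : Type*} [TopologicalSpace X]
    (s : X → ℂ) (z : X → Fin n → ℂ) (hs : Continuous s) (hz : Continuous z) :
    Continuous fun x => homF f (s x) (z x) := by
  unfold homF
  refine continuous_finset_sum _ fun j _ => (hs.pow _).mul ?_
  exact (MvPolynomial.continuous_eval _).comp hz

lemma homF_diff {n : ℕ} (f : MvPolynomial (Fin n) ℂ)
    (s : ℂ → ℂ) (z : ℂ → Fin n → ℂ) (hs : Differentiable ℂ s)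
    (hz : ∀ i, Differentiable ℂ fun w => z w i) :
    Differentiable ℂ fun x => homF f (s x) (z x) := by
  unfold homF
  simp only [MvPolynomial.eval_eq]
  fun_prop

lemma top_ne {n : ℕ} (f : MvPolynomial (Fin n) ℂ) (hf : f ≠ 0) :
    MvPolynomial.homogeneousComponent f.totalDegree f ≠ 0 := by
  obtain ⟨m, hm, h⟩ := Finset.exists_mem_eq_sup f.support
    (MvPolynomial.support_nonempty.2 hf) (fun s => s.sum fun _ e => e)
  intro h0
  have h1 := MvPolynomial.coeff_homogeneousComponent f.totalDegree f m
  rw [h0, if_pos] at h1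
  · exact MvPolynomial.mem_support_iff.1 hm (by simpa using h1.symm)
  · exact h.symm

lemma top_form_ne {n : ℕ} (U : Set (Fin n → ℝ)) (hU : IsOpen U)
    (hcone : ∀ (c : ℝ), 0 < c → ∀ x ∈ U, c • x ∈ U)
    (f : MvPolynomial (Fin n) ℂ)
    (hf : ∀ z : Fin n → ℂ, (fun j => (z j).im) ∈ U → MvPolynomial.eval z f ≠ 0)
    (z0 : Fin n → ℂ) (hz0 : (fun j => (z0 j).im) ∈ U) :
    homF f 0 z0 ≠ 0 := by
  have hf0 : f ≠ 0 := by
    rintro rfl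
    exact hf z0 hz0 (by simp)
  obtain ⟨z1, hz1⟩ : ∃ z1, homF f 0 z1 ≠ 0 := by
    by_contra! h
    apply top_ne f hf0
    apply MvPolynomial.funext
    intro x
    rw [← homF_zero, h]; simp
  let L : ℂ → Fin n → ℂ := fun w => z0 + w • (z1 - z0)
  have hL : Continuous L := by fun_prop
  have hLi : ∀ i, Differentiable ℂ fun w => L w i := by
    intro i
    simp only [L, Pi.add_apply, Pi.smul_apply, smul_eq_mul]
    fun_prop
  have hg : Differentiable ℂ (fun w => homF f 0 (L w)) :=
    homF_diff f _ _ (differentiable_const _) hLi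
  have hga : AnalyticOnNhd ℂ (fun w => homF f 0 (L w)) Set.univ := fun w _ => hg.analyticAt w
  have hev : ∀ᶠ w in 𝓝[≠] (0 : ℂ), homF f 0 (L w) ≠ 0 := by
    rcases (hg.analyticAt 0).eventually_eq_zero_or_eventually_ne_zero with h | h
    · exfalso
      have := hga.eqOn_zero_of_preconnected_of_eventuallyEq_zero isPreconnected_univ
        (Set.mem_univ 0) h (Set.mem_univ 1)
      apply hz1
      simpa [L] using this
    · exact h
  have hev2 : ∀ᶠ w in 𝓝 (0 : ℂ), (fun j => (L w j).im) ∈ U := by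
    have hc : Continuous fun w => (fun j => (L w j).im) :=
      continuous_pi fun j => Complex.continuous_im.comp ((continuous_apply j).comp hL)
    apply hc.continuousAt.eventually_mem
    apply hU.mem_nhds
    simpa [L] using hz0
  rw [eventually_nhdsWithin_iff] at hev
  obtain ⟨ε, hε, hb⟩ := Metric.eventually_nhds_iff.1 (hev.and hev2)
  have key := hurwitz_aux (fun (s : ℝ) (w : ℂ) => homF f (s : ℂ) (L w))
    (homF_cont f _ _ (by fun_prop) (by fun_prop))
    (fun s => homF_diff f _ _ (differentiable_const _) hLi) 0 (ε / 2) (by positivity) ?_ ?_ 0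
    (by simp; positivity)
  · simpa [L] using key
  · intro w hw
    have hw' : ‖w‖ = ε / 2 := by simpa using hw
    have := (hb (y := w) (by rw [dist_zero_right, hw']; linarith)).1 (by
      rintro rfl
      simp at hw'
      linarith)
    simpa using this
  · have h0 : (0 : ℝ) ∈ closure (Set.Ioi (0 : ℝ)) := by simp
    refine closure_mono ?_ h0
    intro s hs w hw
    have hs : 0 < s := hs
    have hw' : ‖w‖ ≤ ε / 2 := by simpa using hw
    have hm := (hb (y := w) (by rw [dist_zero_right]; linarith)).2
    refine homF_ne f s (by exact_mod_cast hs.ne') ((s⁻¹ : ℝ) • L w) (L w) ?_ (hf _ ?_)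
    · ext i
      have : (s : ℂ) ≠ 0 := by exact_mod_cast hs.ne'
      simp [this]
    · have := hcone s⁻¹ (by positivity) _ hm
      convert this using 1
      ext i
      simp

lemma mobius_im (w : ℂ) (hw : ‖w‖ ≤ 1) (h1 : w ≠ 1) :
    0 ≤ (Complex.I * (1 + w) / (1 - w)).im ∧
      (‖w‖ = 1 → (Complex.I * (1 + w) / (1 - w)).im = 0) := by
  have h2 : (1 - w) ≠ 0 := sub_ne_zero.2 (Ne.symm h1)
  have h3 : 0 < Complex.normSq (1 - w) := Complex.normSq_pos.2 h2
  have h4 : (Complex.I * (1 + w) / (1 - w)).im = (1 - ‖w‖ ^ 2) / Complex.normSq (1 - w) := by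
    rw [Complex.div_im, ← Complex.normSq_eq_norm_sq, Complex.normSq_apply w]
    field_simp
    simp
    ring
  rw [h4]
  constructor
  · apply div_nonneg _ h3.le
    nlinarith [norm_nonneg w]
  · intro h; simp [h]

/-- Two-point step: stability on `U` yields stability on `U + U`. -/
lemma add_step {n : ℕ} (U : Set (Fin n → ℝ)) (hU : IsOpen U) (hconn : IsPreconnected U)
    (hcone : ∀ (c : ℝ), 0 < c → ∀ x ∈ U, c • x ∈ U)
    (f : MvPolynomial (Fin n) ℂ)
    (hf : ∀ z : Fin n → ℂ, (fun j => (z j).im) ∈ U → MvPolynomial.eval z f ≠ 0)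
    (z : Fin n → ℂ) (e y : Fin n → ℝ) (he : e ∈ U) (hy : y ∈ U)
    (hz : ∀ j, (z j).im = e j + y j) : MvPolynomial.eval z f ≠ 0 := by
  -- base point `x + i e`
  let b : Fin n → ℂ := fun j => ((z j).re : ℂ) + Complex.I * (e j : ℂ)
  let P : (Fin n → ℝ) → ℂ → Fin n → ℂ :=
    fun v w j => (1 - w) * b j + Complex.I * (1 + w) * (v j : ℂ)
  let G : (Fin n → ℝ) → ℂ → ℂ := fun v w => homF f (1 - w) (P v w)
  have hGc : Continuous (fun p : (Fin n → ℝ) × ℂ => G p.1 p.2) := by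
    refine homF_cont f _ _ (by fun_prop) (continuous_pi fun j => ?_)
    simp only [P]
    fun_prop
  have hGd : ∀ v, Differentiable ℂ (G v) := by
    intro v
    refine homF_diff f _ _ (by fun_prop) fun i => ?_
    simp only [P]
    fun_prop
  have hG1 : ∀ v ∈ U, G v 1 ≠ 0 := by
    intro v hv
    have : G v 1 = homF f 0 (P v 1) := by simp [G]
    rw [this]
    refine top_form_ne U hU hcone f hf _ ?_
    convert hcone 2 (by norm_num) v hv using 1
    ext j
    simp [P]
    norm_num
  have hGne : ∀ (v : Fin n → ℝ) (w : ℂ), w ≠ 1 →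
      (e + (Complex.I * (1 + w) / (1 - w)).im • v) ∈ U → G v w ≠ 0 := by
    intro v w hw h
    have h2 : (1 - w) ≠ 0 := sub_ne_zero.2 (Ne.symm hw)
    refine homF_ne f (1 - w) h2
      (fun j => b j + (Complex.I * (1 + w) / (1 - w)) * (v j : ℂ)) _ ?_ (hf _ ?_)
    · ext j
      simp only [P, Pi.smul_apply, smul_eq_mul]
      field_simp
    · convert h using 1
      ext j
      simp only [b, Complex.add_im, Complex.im_mul_ofReal, Pi.add_apply, Pi.smul_apply, smul_eq_mul]
      simp
  let A : Set (Fin n → ℝ) := {v | ∀ w ∈ Metric.closedBall (0 : ℂ) 1, G v w ≠ 0}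
  have hA : U ⊆ A := by
    refine hconn.subset_of_closure_inter_subset ?_ ⟨e, he, ?_⟩ ?_
    · rw [isOpen_iff_mem_nhds]
      intro v hv
      apply (isCompact_closedBall (0 : ℂ) 1).eventually_forall_of_forall_eventually
      intro w hw
      exact hGc.continuousAt.eventually_ne (hv w hw)
    · intro w hw
      have hw' : ‖w‖ ≤ 1 := by simpa using hw
      by_cases h1 : w = 1
      · rw [h1]; exact hG1 e he
      · apply hGne _ _ h1
        have h0 := (mobius_im w hw' h1).1
        convert hcone (1 + (Complex.I * (1 + w) / (1 - w)).im) (by linarith) e he using 1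
        rw [add_smul, one_smul]
    · rintro v ⟨hv, hvU⟩
      refine hurwitz_aux G hGc hGd v 1 one_pos ?_ hv
      intro w hw
      have hw' : ‖w‖ = 1 := by simpa using hw
      by_cases h1 : w = 1
      · rw [h1]; exact hG1 v hvU
      · apply hGne _ _ h1
        rw [(mobius_im w hw'.le h1).2 hw', zero_smul, add_zero]
        exact he
  have h0 := hA hy 0 (by simp)
  have h1 : G y 0 = MvPolynomial.eval z f := by
    rw [← homF_one]
    simp only [G, sub_zero]
    congr 1
    ext j
    apply Complex.ext
    · simp [P, b]
    · simp [P, b, hz]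
  rwa [h1] at h0

/-- Iterated sumset `U, U+U, (U+U)+(U+U), …` -/
def iterSum {n : ℕ} (U : Set (Fin n → ℝ)) : ℕ → Set (Fin n → ℝ)
  | 0 => U
  | k + 1 => (fun p : (Fin n → ℝ) × (Fin n → ℝ) => p.1 + p.2) '' (iterSum U k ×ˢ iterSum U k)

open Pointwise in
lemma iterSum_props {n : ℕ} (U : Set (Fin n → ℝ)) (hU : IsOpen U) (hconn : IsPreconnected U)
    (hcone : ∀ (c : ℝ), 0 < c → ∀ x ∈ U, c • x ∈ U)
    (f : MvPolynomial (Fin n) ℂ)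
    (hf : ∀ z : Fin n → ℂ, (fun j => (z j).im) ∈ U → MvPolynomial.eval z f ≠ 0) (k : ℕ) :
    IsOpen (iterSum U k) ∧ IsPreconnected (iterSum U k) ∧
    (∀ (c : ℝ), 0 < c → ∀ x ∈ iterSum U k, c • x ∈ iterSum U k) ∧
    (∀ z : Fin n → ℂ, (fun j => (z j).im) ∈ iterSum U k → MvPolynomial.eval z f ≠ 0) := by
  induction k with
  | zero => exact ⟨hU, hconn, hcone, hf⟩
  | succ k ih =>
    obtain ⟨h1, h2, h3, h4⟩ := ih
    refine ⟨?_, ?_, ?_, ?_⟩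
    · have : iterSum U (k + 1) = iterSum U k + iterSum U k := Set.add_image_prod
      rw [this]
      exact h1.add_right
    · exact (h2.prod h2).image _ (by fun_prop)
    · rintro c hc _ ⟨⟨a, b⟩, ⟨ha, hb⟩, rfl⟩
      exact ⟨(c • a, c • b), ⟨h3 c hc a ha, h3 c hc b hb⟩, (smul_add c a b).symm⟩
    · rintro z ⟨⟨a, b⟩, ⟨ha, hb⟩, hab⟩
      exact add_step _ h1 h2 h3 f h4 z a b ha hb fun j => (congrFun hab j).symm

/-- If `f` is `K`-stable for a non-convex cone `K` with non-empty connected interior,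
then `f` is `cl(conv(int K))`-stable. -/
theorem stmt2 {n : ℕ} (K : Set (Fin n → ℝ))
    (hKcone : ∀ (c : ℝ), 0 < c → ∀ x ∈ K, c • x ∈ K)
    (hKnconv : ¬ Convex ℝ K)
    (hKint : IsConnected (interior K))
    (f : MvPolynomial (Fin n) ℂ) (hf : KStable K f) :
    KStable (closure (convexHull ℝ (interior K))) f := by
  have hcone : ∀ (c : ℝ), 0 < c → ∀ x ∈ interior K, c • x ∈ interior K := by
    intro c hc x hx
    rw [mem_interior_iff_mem_nhds] at hx ⊢
    have h1 : (fun v : Fin n → ℝ => c⁻¹ • v) ⁻¹' K ∈ 𝓝 (c • x) := by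
      apply (continuous_const_smul c⁻¹).continuousAt.preimage_mem_nhds
      rwa [inv_smul_smul₀ hc.ne']
    filter_upwards [h1] with v hv
    have := hKcone c hc _ hv
    rwa [smul_inv_smul₀ hc.ne'] at this
  have hp := iterSum_props (interior K) isOpen_interior hKint.isPreconnected hcone f hf
  have hmono : Monotone (iterSum (interior K)) := by
    refine monotone_nat_of_le_succ fun k x hx => ?_
    have h2 := (hp k).2.2.1 (1 / 2) (by norm_num) x hx
    exact ⟨((1 / 2 : ℝ) • x, (1 / 2 : ℝ) • x), ⟨h2, h2⟩, by
      simp only [← add_smul]; norm_num⟩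
  have hconv : Convex ℝ (⋃ k, iterSum (interior K) k) := by
    rw [convex_iff_forall_pos]
    intro x hx y hy a b ha hb _
    obtain ⟨k, hk⟩ := Set.mem_iUnion.1 hx
    obtain ⟨l, hl⟩ := Set.mem_iUnion.1 hy
    refine Set.mem_iUnion.2 ⟨max k l + 1, (a • x, b • y), ⟨?_, ?_⟩, rfl⟩
    · exact (hp _).2.2.1 a ha x (hmono (le_max_left k l) hk)
    · exact (hp _).2.2.1 b hb y (hmono (le_max_right k l) hl)
  have hsub : convexHull ℝ (interior K) ⊆ ⋃ k, iterSum (interior K) k :=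
    convexHull_min (Set.subset_iUnion (iterSum (interior K)) 0) hconv
  have hopen : IsOpen (convexHull ℝ (interior K)) := isOpen_interior.convexHull
  intro z hz
  rw [(convex_convexHull ℝ _).interior_closure_eq_interior_of_nonempty_interior
    (by rw [hopen.interior_eq]; exact hKint.nonempty.convexHull), hopen.interior_eq] at hz
  obtain ⟨k, hk⟩ := Set.mem_iUnion.1 (hsub hz)
  exact (hp k).2.2.2 z hk
end

section
/- If h = g + i·f is K-stable, where f, g ∈ ℝ[z₁,…,zₙ], then each of f and g is K-stable or identically zero. -/
open MvPolynomial

theorem poly_conj_le (p : Polynomial ℂ) (hp : ∀ t : ℂ, 0 < t.im → p.eval t ≠ 0) (t : ℂ)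
    (ht : 0 < t.im) : ‖p.eval ((starRingEnd ℂ) t)‖ ≤ ‖p.eval t‖ := by
  have hs := IsAlgClosed.splits p
  rw [hs.eval_eq_prod_roots, hs.eval_eq_prod_roots, norm_mul, norm_mul]
  refine mul_le_mul_of_nonneg_left ?_ (norm_nonneg _)
  have hr : ∀ a ∈ p.roots, a.im ≤ 0 := by
    intro a ha
    by_contra hlt
    exact hp a (not_le.1 hlt) (Polynomial.isRoot_of_mem_roots ha)
  generalize p.roots = s at hr
  induction s using Multiset.induction_on with
  | empty => simp
  | cons a s ih =>
    simp only [Multiset.map_cons, Multiset.prod_cons, norm_mul]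
    have ha := hr a (Multiset.mem_cons_self a s)
    refine mul_le_mul ?_ (ih fun b hb => hr b (Multiset.mem_cons_of_mem hb)) (norm_nonneg _)
      (norm_nonneg _)
    rw [← sq_le_sq₀ (norm_nonneg _) (norm_nonneg _), ← Complex.normSq_eq_norm_sq,
      ← Complex.normSq_eq_norm_sq, Complex.normSq_apply, Complex.normSq_apply]
    simp only [Complex.sub_re, Complex.sub_im, Complex.conj_re, Complex.conj_im]
    nlinarith

theorem eval_conj_map {n : ℕ} (f : MvPolynomial (Fin n) ℝ) (z : Fin n → ℂ) :
    MvPolynomial.eval (fun j => (starRingEnd ℂ) (z j)) (f.map (algebraMap ℝ ℂ)) =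
      (starRingEnd ℂ) (MvPolynomial.eval z (f.map (algebraMap ℝ ℂ))) := by
  induction f using MvPolynomial.induction_on with
  | C a => simp
  | add p q hp hq => simp [hp, hq]
  | mul_X p i hp => simp [hp]

theorem zero_of_tube {n : ℕ} (U : Set (Fin n → ℂ)) (hU : IsOpen U) (hne : U.Nonempty)
    (f : MvPolynomial (Fin n) ℝ)
    (hf : ∀ z ∈ U, MvPolynomial.eval z (f.map (algebraMap ℝ ℂ)) = 0) : f = 0 := by
  obtain ⟨z, hz⟩ := hne
  obtain ⟨ε, hε, hb⟩ := Metric.isOpen_iff.1 hU z hz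
  apply MvPolynomial.map_injective (algebraMap ℝ ℂ) (algebraMap ℝ ℂ).injective
  rw [map_zero]
  refine MvPolynomial.funext_set (fun j => Metric.ball (z j) ε) (fun j => ?_) ?_
  · exact infinite_of_mem_nhds (z j) (Metric.ball_mem_nhds _ hε)
  · intro w hw
    rw [map_zero]
    refine hf w (hb ?_)
    rw [ball_pi _ hε]
    exact hw

open scoped Pointwise in
theorem tube_ineq {n : ℕ} (K : Set (Fin n → ℝ))
    (hKcone : ∀ (c : ℝ), 0 ≤ c → ∀ x ∈ K, c • x ∈ K)
    (f g : MvPolynomial (Fin n) ℝ)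
    (h : KStable K (g.map (algebraMap ℝ ℂ) + C Complex.I * f.map (algebraMap ℝ ℂ)))
    (z : Fin n → ℂ) (hz : (fun j => (z j).im) ∈ interior K) :
    ‖MvPolynomial.eval z (g.map (algebraMap ℝ ℂ)) -
      Complex.I * MvPolynomial.eval z (f.map (algebraMap ℝ ℂ))‖ ≤
    ‖MvPolynomial.eval z (g.map (algebraMap ℝ ℂ)) +
      Complex.I * MvPolynomial.eval z (f.map (algebraMap ℝ ℂ))‖ := by
  set H := g.map (algebraMap ℝ ℂ) + C Complex.I * f.map (algebraMap ℝ ℂ) with hH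
  let q : Fin n → Polynomial ℂ := fun j =>
    Polynomial.C ((z j).re : ℂ) + Polynomial.X * Polynomial.C ((z j).im : ℂ)
  let p : Polynomial ℂ := MvPolynomial.aeval q H
  have hev : ∀ t : ℂ, p.eval t =
      MvPolynomial.eval (fun j => ((z j).re : ℂ) + t * ((z j).im : ℂ)) H := by
    intro t
    have : ∀ F : MvPolynomial (Fin n) ℂ, (MvPolynomial.aeval q F).eval t =
      MvPolynomial.eval (fun j => ((z j).re : ℂ) + t * ((z j).im : ℂ)) F := by
      intro F
      induction F using MvPolynomial.induction_on with
      | C a => simp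
      | add p q hp hq => simp [hp, hq]
      | mul_X p i hp =>
        rw [map_mul, map_mul, Polynomial.eval_mul, hp]
        simp only [MvPolynomial.aeval_X, MvPolynomial.eval_X, q,
          Polynomial.eval_add, Polynomial.eval_mul, Polynomial.eval_C, Polynomial.eval_X]
    exact this H
  have hp : ∀ t : ℂ, 0 < t.im → p.eval t ≠ 0 := by
    intro t ht
    rw [hev]
    apply h
    have hsub : t.im • interior K ⊆ interior K := by
      rw [← interior_smul₀ ht.ne']
      apply interior_mono
      rintro _ ⟨x, hx, rfl⟩
      exact hKcone _ ht.le x hx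
    have := hsub (Set.smul_mem_smul_set hz)
    convert this using 1
    ext j
    simp
  have key := poly_conj_le p hp Complex.I (by simp)
  rw [hev, hev] at key
  have e1 : (fun j => ((z j).re : ℂ) + Complex.I * ((z j).im : ℂ)) = z := by
    ext j
    rw [mul_comm, Complex.re_add_im]
  have e2 : (fun j => ((z j).re : ℂ) + (starRingEnd ℂ) Complex.I * ((z j).im : ℂ)) =
      fun j => (starRingEnd ℂ) (z j) := by
    ext j
    apply Complex.ext <;> simp
  rw [e1, e2, hH] at key
  simp only [map_add, map_mul, eval_conj_map, MvPolynomial.eval_C] at key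
  refine le_trans (le_of_eq ?_) key
  rw [← Complex.norm_conj]
  simp [sub_eq_add_neg]

theorem stmt9 {n : ℕ} (K : Set (Fin n → ℝ))
    (hKcl : IsClosed K) (hKconv : Convex ℝ K)
    (hKcone : ∀ (c : ℝ), 0 ≤ c → ∀ x ∈ K, c • x ∈ K)
    (hKpointed : K ∩ (-K) ⊆ {0}) (hKfull : (interior K).Nonempty)
    (f g : MvPolynomial (Fin n) ℝ)
    (h : KStable K (g.map (algebraMap ℝ ℂ) + C Complex.I * f.map (algebraMap ℝ ℂ))) :
    (KStable K (f.map (algebraMap ℝ ℂ)) ∨ f = 0) ∧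
      (KStable K (g.map (algebraMap ℝ ℂ)) ∨ g = 0) := by
  let U : Set (Fin n → ℂ) := {z | (fun j => (z j).im) ∈ interior K}
  have hUo : IsOpen U := isOpen_interior.preimage (by fun_prop)
  have hUc : Convex ℝ U := by
    intro x hx y hy a b ha hb hab
    have := hKconv.interior hx hy ha hb hab
    change _ ∈ interior K
    convert this using 1
    ext j
    simp
  have hdiff : ∀ F : MvPolynomial (Fin n) ℂ, Differentiable ℂ fun z => MvPolynomial.eval z F := by
    intro F
    induction F using MvPolynomial.induction_on with
    | C a => simp
    | add p q hp hq => 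
      simp only [map_add]
      exact Differentiable.fun_add hp hq
    | mul_X p i hp =>
      simp only [map_mul, MvPolynomial.eval_X]
      exact hp.mul (by fun_prop)
  let G : (Fin n → ℂ) → ℂ := fun z => MvPolynomial.eval z (g.map (algebraMap ℝ ℂ))
  let F : (Fin n → ℂ) → ℂ := fun z => MvPolynomial.eval z (f.map (algebraMap ℝ ℂ))
  have hG : Differentiable ℂ G := hdiff _
  have hF : Differentiable ℂ F := hdiff _
  have hne : ∀ z ∈ U, G z + Complex.I * F z ≠ 0 := by
    intro z hz
    simpa [G, F] using h z hz
  let φ : (Fin n → ℂ) → ℂ := fun z => (G z - Complex.I * F z) / (G z + Complex.I * F z)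
  have hφ : DifferentiableOn ℂ φ U := by
    intro z hz
    apply DifferentiableAt.differentiableWithinAt
    have h1 := hG z
    have h2 := hF z
    have h3 : DifferentiableAt ℂ (fun z => G z - Complex.I * F z) z := h1.fun_sub (h2.const_mul _)
    have h4 : DifferentiableAt ℂ (fun z => G z + Complex.I * F z) z := h1.fun_add (h2.const_mul _)
    simp only [φ, div_eq_mul_inv]
    exact h3.fun_mul (h4.fun_inv (hne z hz))
  have hle : ∀ z ∈ U, ‖φ z‖ ≤ 1 := by
    intro z hz
    simp only [φ, norm_div]
    exact div_le_one_of_le₀ (tube_ineq K hKcone f g h z hz) (norm_nonneg _)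
  have hconst : ∀ z ∈ U, ‖φ z‖ = 1 → ∀ w ∈ U, φ w = φ z := by
    intro z hz h1 w hw
    refine Complex.eqOn_of_isPreconnected_of_isMaxOn_norm hUc.isPreconnected hUo hφ hz ?_ hw
    intro v hv
    simpa [h1] using hle v hv
  constructor
  · by_cases hs : KStable K (f.map (algebraMap ℝ ℂ))
    · exact Or.inl hs
    right
    simp only [KStable, not_forall, not_not] at hs
    obtain ⟨z, hz, h0⟩ := hs
    have hz0 : F z = 0 := h0
    have hnz := hne z hz
    have hφz : φ z = 1 := by
      simp only [hz0, mul_zero, add_zero] at hnz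
      simp [φ, hz0, hnz]
    refine zero_of_tube U hUo ⟨z, hz⟩ f fun w hw => ?_
    have e := hconst z hz (by simp [hφz]) w hw
    rw [hφz] at e
    simp only [φ] at e
    rw [div_eq_one_iff_eq (hne w hw)] at e
    have : Complex.I * F w = 0 := by linear_combination (-1/2) * e
    change F w = 0
    simpa using this
  · by_cases hs : KStable K (g.map (algebraMap ℝ ℂ))
    · exact Or.inl hs
    right
    simp only [KStable, not_forall, not_not] at hs
    obtain ⟨z, hz, h0⟩ := hs
    have hz0 : G z = 0 := h0
    have hnz := hne z hz
    have hφz : φ z = -1 := by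
      simp only [φ]
      rw [div_eq_iff hnz, hz0]
      ring
    refine zero_of_tube U hUo ⟨z, hz⟩ g fun w hw => ?_
    have e := hconst z hz (by simp [hφz]) w hw
    rw [hφz] at e
    simp only [φ] at e
    rw [div_eq_iff (hne w hw)] at e
    change G w = 0
    linear_combination (1/2) * e
end

section
/- Let f, g ∈ ℝ[z₁,…,zₙ] be nonzero and K ⊂ ℝⁿ a proper cone. Suppose λf + μg is K-stable or zero for all λ, μ ∈ ℝ, and the directional Wronskian W_v(f,g) = (∂_v f)·g − f·(∂_v g) is ≤ 0 on ℝⁿ for all v ∈ int K. Then g + i·f is K-stable. -/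
open MvPolynomial

noncomputable def dirDeriv {n : ℕ} (v : Fin n → ℝ) (h : MvPolynomial (Fin n) ℝ) :
    MvPolynomial (Fin n) ℝ :=
  ∑ j, C (v j) * pderiv j h

noncomputable def wronskian {n : ℕ} (v : Fin n → ℝ) (f g : MvPolynomial (Fin n) ℝ) :
    MvPolynomial (Fin n) ℝ :=
  dirDeriv v f * g - f * dirDeriv v g

/-- restriction of a polynomial to the line `x + t v`. -/
noncomputable def lineP {n : ℕ} (x v : Fin n → ℝ) (f : MvPolynomial (Fin n) ℝ) : Polynomial ℝ :=
  MvPolynomial.aeval (fun j => Polynomial.C (x j) + Polynomial.C (v j) * Polynomial.X) f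

lemma lineP_aeval {n : ℕ} (x v : Fin n → ℝ) (f : MvPolynomial (Fin n) ℝ) (w : ℂ) :
    Polynomial.aeval w (lineP x v f) =
      MvPolynomial.eval (fun j => (x j : ℂ) + v j * w) (f.map (algebraMap ℝ ℂ)) := by
  unfold lineP
  induction f using MvPolynomial.induction_on with
  | C a => simp
  | add p q hp hq => simp [hp, hq]
  | mul_X p i hp => simp [hp]

lemma lineP_eval {n : ℕ} (x v : Fin n → ℝ) (f : MvPolynomial (Fin n) ℝ) (t : ℝ) :
    Polynomial.eval t (lineP x v f) = MvPolynomial.eval (fun j => x j + v j * t) f := by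
  unfold lineP
  induction f using MvPolynomial.induction_on with
  | C a => simp
  | add p q hp hq => simp [hp, hq]
  | mul_X p i hp => simp [hp]

lemma dirDeriv_add {n : ℕ} (v : Fin n → ℝ) (p q : MvPolynomial (Fin n) ℝ) :
    dirDeriv v (p + q) = dirDeriv v p + dirDeriv v q := by
  simp [dirDeriv, mul_add, Finset.sum_add_distrib]

lemma dirDeriv_mul_X {n : ℕ} (v : Fin n → ℝ) (p : MvPolynomial (Fin n) ℝ) (i : Fin n) :
    dirDeriv v (p * X i) = dirDeriv v p * X i + p * C (v i) := by
  simp only [dirDeriv, Derivation.leibniz, smul_eq_mul, mul_add, Finset.sum_add_distrib]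
  rw [add_comm]
  congr 1
  · rw [Finset.sum_mul]
    exact Finset.sum_congr rfl fun j _ => by ring
  · rw [Finset.sum_eq_single i]
    · simp; ring
    · intro j _ hj
      simp [pderiv_X_of_ne hj.symm]
    · simp

lemma lineP_derivative {n : ℕ} (x v : Fin n → ℝ) (f : MvPolynomial (Fin n) ℝ) :
    Polynomial.derivative (lineP x v f) = lineP x v (dirDeriv v f) := by
  induction f using MvPolynomial.induction_on with
  | C a => simp [lineP, dirDeriv]
  | add p q hp hq =>
    rw [dirDeriv_add]; simp only [lineP, map_add] at *; rw [hp, hq]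
  | mul_X p i hp =>
    rw [dirDeriv_mul_X]; simp only [lineP, map_add, map_mul, Polynomial.derivative_mul] at *
    rw [hp]; simp

lemma lineP_wronskian {n : ℕ} (x v : Fin n → ℝ) (f g : MvPolynomial (Fin n) ℝ) :
    lineP x v (wronskian v f g) = (lineP x v f).derivative * lineP x v g
      - lineP x v f * (lineP x v g).derivative := by
  rw [lineP_derivative, lineP_derivative]
  simp [lineP, wronskian]

/-- univariate core -/
lemma uni_core (F G : Polynomial ℝ) (hF : ∀ w : ℂ, 0 < w.im → Polynomial.aeval w F ≠ 0)
    (hlin : ∀ r : ℝ, ∀ w : ℂ, 0 < w.im → Polynomial.aeval w G ≠ r * Polynomial.aeval w F)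
    (hW : ∀ t : ℝ, (F.derivative * G - F * G.derivative).eval t ≤ 0) :
    Polynomial.aeval Complex.I G ≠ - Complex.I * Polynomial.aeval Complex.I F := by
  intro hI
  have hF0 : F ≠ 0 := by
    rintro rfl
    exact hF Complex.I (by simp) (by simp)
  by_cases hW0 : F.derivative * G - F * G.derivative = 0
  · -- the quotient is constant on the upper half plane
    have hopen : IsOpen {w : ℂ | 0 < w.im} := isOpen_lt continuous_const Complex.continuous_im
    have hconn : IsPreconnected {w : ℂ | 0 < w.im} :=
      (convex_halfSpace_im_gt 0).isPreconnected
    have hder : ∀ w : ℂ, 0 < w.im → HasDerivAt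
        (fun w : ℂ => Polynomial.aeval w G / Polynomial.aeval w F) 0 w := by
      intro w hw
      have h := (G.hasDerivAt_aeval w).fun_div (F.hasDerivAt_aeval w) (hF w hw)
      refine h.congr_deriv ?_
      have h2 := congrArg (Polynomial.aeval w) hW0
      simp only [map_sub, map_mul, map_zero] at h2
      rw [div_eq_zero_iff]; left
      linear_combination -h2
    have hconst : ∀ w : ℂ, 0 < w.im →
        Polynomial.aeval w G / Polynomial.aeval w F = -Complex.I := by
      intro w hw
      have := hopen.is_const_of_deriv_eq_zero hconn
        (f := fun w : ℂ => Polynomial.aeval w G / Polynomial.aeval w F)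
        (fun w hw => (hder w hw).differentiableAt.differentiableWithinAt)
        (fun w hw => (hder w hw).deriv) hw (show Complex.I ∈ {w : ℂ | 0 < w.im} by simp)
      rw [this, hI]
      field_simp [hF Complex.I (by simp)]
    have hall : ∀ t : ℝ, (Polynomial.aeval (t : ℂ) G : ℂ)
        = -Complex.I * Polynomial.aeval (t : ℂ) F := by
      intro t
      have hc : Continuous fun s : ℝ => (Polynomial.aeval ((t : ℂ) + s * Complex.I) G : ℂ)
        + Complex.I * Polynomial.aeval ((t : ℂ) + s * Complex.I) F := by fun_prop
      have h0 : Filter.Tendsto (fun s : ℝ => (Polynomial.aeval ((t : ℂ) + s * Complex.I) G : ℂ)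
        + Complex.I * Polynomial.aeval ((t : ℂ) + s * Complex.I) F) (nhdsWithin 0 (Set.Ioi 0))
          (nhds 0) := by
        refine tendsto_const_nhds.congr' ?_
        filter_upwards [self_mem_nhdsWithin] with s hs
        have him : 0 < ((t : ℂ) + s * Complex.I).im := by simpa using hs
        have := hconst _ him
        rw [div_eq_iff (hF _ him)] at this
        rw [this]; ring
      have h1 := tendsto_nhds_unique h0 (hc.continuousWithinAt (s := Set.Ioi 0) (x := (0:ℝ)))
      simp only [Complex.ofReal_zero, zero_mul, add_zero] at h1
      linear_combination -h1
    apply hF0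
    apply Polynomial.funext
    intro t
    have h := congrArg Complex.im (hall t)
    have e : ∀ P : Polynomial ℝ, (Polynomial.aeval (t : ℂ) P : ℂ) = ((P.eval t : ℝ) : ℂ) := by
      intro P
      exact (Polynomial.aeval_algebraMap_apply_eq_algebraMap_eval t P)
    rw [e, e] at h
    simp at h
    simpa using h
  · obtain ⟨t, ht⟩ : ∃ t : ℝ, (F.derivative * G - F * G.derivative).eval t ≠ 0 := by
      by_contra! h
      exact hW0 (Polynomial.funext (by simpa using h))
    have hneg := lt_of_le_of_ne (hW t) ht
    have e : ∀ P : Polynomial ℝ, (Polynomial.aeval (t : ℂ) P : ℂ) = ((P.eval t : ℝ) : ℂ) := by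
      intro P
      exact (Polynomial.aeval_algebraMap_apply_eq_algebraMap_eval t P)
    let ψ : ℂ → ℝ := fun w => (Polynomial.aeval w G * (starRingEnd ℂ) (Polynomial.aeval w F)).im
    have hψc : Continuous ψ := by
      have : Continuous fun w : ℂ => Polynomial.aeval w G * (starRingEnd ℂ) (Polynomial.aeval w F) := by
        refine Continuous.mul (by fun_prop) (Complex.continuous_conj.comp (by fun_prop))
      exact Complex.continuous_im.comp this
    have hψI : ψ Complex.I < 0 := by
      have : ψ Complex.I = - Complex.normSq (Polynomial.aeval Complex.I F) := by
        simp only [ψ]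
        rw [hI, mul_assoc, Complex.mul_conj]; simp
      rw [this]
      simpa [Complex.normSq_pos] using hF Complex.I (by simp)
    have hlin' : ∀ s : ℝ, HasDerivAt (fun s : ℝ => (t : ℂ) + s * Complex.I) Complex.I s := by
      intro s
      simpa using ((Complex.ofRealCLM.hasDerivAt (x := s)).mul_const Complex.I).const_add (t : ℂ)
    have hP : ∀ P : Polynomial ℝ, HasDerivAt
        (fun s : ℝ => (Polynomial.aeval ((t : ℂ) + s * Complex.I) P : ℂ))
        (((P.derivative.eval t : ℝ) : ℂ) * Complex.I) 0 := by
      intro P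
      have h1 := P.hasDerivAt_aeval ((t : ℂ) + (0:ℝ) * Complex.I)
      have := h1.comp (0:ℝ) (hlin' 0)
      refine this.congr_deriv ?_
      simp [e]
    have hd : HasDerivAt (fun s : ℝ => ψ ((t : ℂ) + s * Complex.I))
        (-((F.derivative * G - F * G.derivative).eval t)) 0 := by
      have h1 := (hP G).mul ((hP F).star)
      have h2 := (Complex.imCLM.hasFDerivAt.comp_hasDerivAt (0:ℝ) h1)
      refine h2.congr_deriv ?_
      simp [e]
      ring
    have hψ0 : ψ ((t : ℂ) + (0:ℝ) * Complex.I) = 0 := by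
      simp [ψ, e]
    obtain ⟨s, hs, hspos⟩ : ∃ s : ℝ, 0 < s ∧ 0 < ψ ((t : ℂ) + s * Complex.I) := by
      have h := hd.tendsto_slope_zero_right
      have h2 := h.eventually (lt_mem_nhds (neg_pos.mpr hneg))
      obtain ⟨s, hs1, hs2⟩ := (h2.and self_mem_nhdsWithin).exists
      have hs2' : 0 < s := hs2
      refine ⟨s, hs2', ?_⟩
      simp only [zero_add, hψ0, sub_zero, smul_eq_mul] at hs1
      exact (pos_iff_pos_of_mul_pos hs1).mp (inv_pos.mpr hs2')
    have hconn : IsPreconnected {w : ℂ | 0 < w.im} :=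
      (convex_halfSpace_im_gt 0).isPreconnected
    have him := hconn.intermediate_value (show Complex.I ∈ {w : ℂ | 0 < w.im} by simp)
      (show (t : ℂ) + s * Complex.I ∈ {w : ℂ | 0 < w.im} by simpa using hs) hψc.continuousOn
    obtain ⟨w, hw, hw0⟩ := him ⟨hψI.le, hspos.le⟩
    have hFw := hF w hw
    let q := Polynomial.aeval w G * (starRingEnd ℂ) (Polynomial.aeval w F)
    have hq : q = (q.re : ℂ) := Complex.ext rfl (by rw [Complex.ofReal_im]; exact hw0)
    apply hlin (q.re / Complex.normSq (Polynomial.aeval w F)) w hw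
    have hn : (Complex.normSq (Polynomial.aeval w F) : ℂ) ≠ 0 := by
      simpa using hFw
    push_cast
    rw [← hq, div_mul_eq_mul_div, eq_div_iff hn, ← Complex.mul_conj]
    simp only [q]; ring

/-- If `λ f + μ g` is `K`-stable or zero for all real `λ, μ`, and `W_v(f,g) ≤ 0` on `ℝⁿ`
for all `v ∈ int K`, then `g + i f` is `K`-stable. -/
theorem stmt12 {n : ℕ} (K : Set (Fin n → ℝ))
    (hKcl : IsClosed K) (hKconv : Convex ℝ K)
    (hKcone : ∀ (c : ℝ), 0 ≤ c → ∀ x ∈ K, c • x ∈ K)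
    (hKpointed : K ∩ (-K) ⊆ {0}) (hKfull : (interior K).Nonempty)
    (f g : MvPolynomial (Fin n) ℝ) (hf : f ≠ 0) (hg : g ≠ 0)
    (hlin : ∀ lam mu : ℝ, KStable K ((lam • f + mu • g).map (algebraMap ℝ ℂ)) ∨
      lam • f + mu • g = 0)
    (hW : ∀ v ∈ interior K, ∀ x : Fin n → ℝ, MvPolynomial.eval x (wronskian v f g) ≤ 0) :
    KStable K (g.map (algebraMap ℝ ℂ) + C Complex.I * f.map (algebraMap ℝ ℂ)) := by
  intro z hz hzero
  set v : Fin n → ℝ := fun j => (z j).im with hv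
  set x : Fin n → ℝ := fun j => (z j).re with hx
  have hcone : ∀ c : ℝ, 0 < c → c • v ∈ interior K := by
    intro c hc
    have h1 : c • v ∈ interior (Set.image (fun y : Fin n → ℝ => c • y) K) := by
      have := (isOpenMap_smul₀ (α := Fin n → ℝ) hc.ne').image_interior_subset K
      exact this ⟨v, hz, rfl⟩
    refine interior_mono ?_ h1
    rintro _ ⟨y, hy, rfl⟩
    exact hKcone c hc.le y hy
  have hmem : ∀ w : ℂ, 0 < w.im →
      (fun j => (((x j : ℂ) + v j * w)).im) ∈ interior K := by
    intro w hw
    convert hcone w.im hw using 1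
    funext j
    simp [mul_comm]
  have hzI : (fun j => (x j : ℂ) + v j * Complex.I) = z := by
    funext j
    exact Complex.re_add_im (z j)
  have hF : ∀ w : ℂ, 0 < w.im → Polynomial.aeval w (lineP x v f) ≠ 0 := by
    intro w hw
    rw [lineP_aeval]
    rcases hlin 1 0 with h | h
    · have := h _ (hmem w hw)
      simpa using this
    · simp at h; exact absurd h hf
  have hz' : MvPolynomial.eval z (g.map (algebraMap ℝ ℂ))
      = - Complex.I * MvPolynomial.eval z (f.map (algebraMap ℝ ℂ)) := by
    simp only [map_add, map_mul, eval_C] at hzero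
    linear_combination hzero
  refine uni_core (lineP x v f) (lineP x v g) hF ?_ ?_ ?_
  · intro r w hw heq
    rw [lineP_aeval, lineP_aeval] at heq
    rcases hlin (-r) 1 with h | h
    · apply h _ (hmem w hw)
      simp [MvPolynomial.smul_eq_C_mul, heq]
    · have hgr : g = C r * f := by
        rw [MvPolynomial.smul_eq_C_mul, MvPolynomial.smul_eq_C_mul] at h
        simp only [map_neg, map_one] at h
        linear_combination h
      have hfz := hF Complex.I (by simp)
      rw [lineP_aeval, hzI] at hfz
      rw [hgr] at hz'
      simp only [map_mul, MvPolynomial.map_C, eval_C] at hz'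
      have h3 := mul_right_cancel₀ hfz hz'
      have := congrArg Complex.im h3
      simp at this
  · intro t
    rw [← lineP_wronskian, lineP_eval]
    exact hW v hz _
  · rw [lineP_aeval, lineP_aeval, hzI]
    exact hz'
end

section
/- Let K = cone(v⁽¹⁾,…,v⁽ᵏ⁾) be a polyhedral proper cone in ℝⁿ and f, g ∈ ℝ[z₁,…,zₙ] nonzero. If λf + μg is K-stable or zero for all λ, μ ∈ ℝ, and W_{v⁽ʲ⁾}(f,g) ≤ 0 on ℝⁿ for each generator v⁽ʲ⁾, j = 1,…,k, then g + i·f is K-stable. -/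
open MvPolynomial

section Univariate
open Polynomial

lemma aux_coprime (F G : ℝ[X]) (hF : F ≠ 0)
    (hW : derivative F * G = F * derivative G) :
    ∃ a b : ℝ, (a ≠ 0 ∨ b ≠ 0) ∧ Polynomial.C a * F + Polynomial.C b * G = 0 := by
  classical
  set d := EuclideanDomain.gcd F G with hd
  obtain ⟨F1, hF1⟩ : d ∣ F := EuclideanDomain.gcd_dvd_left F G
  obtain ⟨G1, hG1⟩ : d ∣ G := EuclideanDomain.gcd_dvd_right F G
  have hd0 : d ≠ 0 := by
    intro h
    rw [h, zero_mul] at hF1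
    exact hF hF1
  have hcop : IsCoprime F1 G1 := by
    refine ⟨EuclideanDomain.gcdA F G, EuclideanDomain.gcdB F G, ?_⟩
    have := EuclideanDomain.gcd_eq_gcd_ab F G
    rw [← hd] at this
    apply mul_left_cancel₀ hd0
    calc _ = (d * F1) * EuclideanDomain.gcdA F G + (d * G1) * EuclideanDomain.gcdB F G := by ring
      _ = d * 1 := by rw [← hF1, ← hG1, ← this, mul_one]
  have hw : Polynomial.wronskian F1 G1 = 0 := by
    have h2 : d * d * Polynomial.wronskian F1 G1 = 0 := by
      have h3 := hW
      rw [hF1, hG1, derivative_mul, derivative_mul] at h3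
      unfold Polynomial.wronskian
      linear_combination (-1 : ℝ[X]) * h3
    rcases mul_eq_zero.1 h2 with h | h
    · exact absurd h (mul_ne_zero hd0 hd0)
    · exact h
  obtain ⟨h1, h2⟩ := (hcop.wronskian_eq_zero_iff).1 hw
  have e1 := eq_C_of_derivative_eq_zero h1
  have e2 := eq_C_of_derivative_eq_zero h2
  refine ⟨G1.coeff 0, -F1.coeff 0, ?_, ?_⟩
  · by_contra! h
    rw [e1, e2, h.1, neg_eq_zero.1 h.2] at hcop
    simp only [Polynomial.C_0] at hcop
    obtain ⟨u, w, huw⟩ := hcop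
    simp at huw
  · rw [Polynomial.C_neg, ← e2, ← e1, hF1, hG1]
    ring

lemma aux_uni (F G : ℝ[X])
    (h : ∀ a b : ℝ, (a ≠ 0 ∨ b ≠ 0) → ∀ t : ℂ, 0 < t.im →
      (a : ℂ) * aeval t F + (b : ℂ) * aeval t G ≠ 0)
    (hW : ∀ s : ℝ, (derivative F).eval s * G.eval s - F.eval s * (derivative G).eval s ≤ 0) :
    aeval Complex.I G + Complex.I * aeval Complex.I F ≠ 0 := by
  intro h0
  have hFne : ∀ t : ℂ, 0 < t.im → aeval t F ≠ 0 := by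
    intro t ht hz
    exact h 1 0 (by simp) t ht (by simp [hz])
  let q : ℂ → ℝ := fun t => (aeval t G * (starRingEnd ℂ) (aeval t F)).im
  have hqc : Continuous q := by
    have c1 : Continuous fun t : ℂ => aeval t G := G.continuous_aeval
    have c2 : Continuous fun t : ℂ => aeval t F := F.continuous_aeval
    exact Complex.continuous_im.comp (c1.mul (Complex.continuous_conj.comp c2))
  have hq0 : ∀ t : ℂ, 0 < t.im → q t ≠ 0 := by
    intro t ht hz
    have hn : aeval t F ≠ 0 := hFne t ht
    have hns : Complex.normSq (aeval t F) ≠ 0 := by simpa using hn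
    have hr : aeval t G * (starRingEnd ℂ) (aeval t F)
        = ((aeval t G * (starRingEnd ℂ) (aeval t F)).re : ℂ) := by
      apply Complex.ext
      · simp
      · rw [Complex.ofReal_im]; exact hz
    refine h ((aeval t G * (starRingEnd ℂ) (aeval t F)).re) (-Complex.normSq (aeval t F))
      (Or.inr (by simpa using hn)) t ht ?_
    rw [← hr, Complex.ofReal_neg, ← Complex.mul_conj]
    ring
  have hqI : q Complex.I < 0 := by
    have e : aeval Complex.I G = -Complex.I * aeval Complex.I F := by linear_combination h0
    have e2 : q Complex.I = - Complex.normSq (aeval Complex.I F) := by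
      change (aeval Complex.I G * (starRingEnd ℂ) (aeval Complex.I F)).im = _
      rw [e, mul_assoc, Complex.mul_conj]
      simp
    rw [e2]
    have := Complex.normSq_pos.2 (hFne Complex.I (by simp))
    linarith
  have hqneg : ∀ t : ℂ, 0 < t.im → q t < 0 := by
    intro t ht
    by_contra! hc
    have hpc : IsPreconnected {z : ℂ | 0 < z.im} := (convex_halfSpace_im_gt 0).isPreconnected
    obtain ⟨z, hz, hz0⟩ := hpc.intermediate_value (a := Complex.I) (b := t) (by simp) ht
      hqc.continuousOn (show (0:ℝ) ∈ Set.Icc _ _ from ⟨hqI.le, hc⟩)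
    exact hq0 z hz hz0
  have hWz : ∀ s : ℝ,
      (derivative F).eval s * G.eval s - F.eval s * (derivative G).eval s = 0 := by
    intro s
    apply le_antisymm (hW s)
    have hl : HasDerivAt (fun e : ℝ => (s : ℂ) + e * Complex.I) Complex.I 0 := by
      have := ((Complex.ofRealCLM.hasDerivAt (x := (0:ℝ))).mul_const Complex.I).const_add (s : ℂ)
      simpa using this
    have hP : ∀ P : ℝ[X], HasDerivAt (fun e : ℝ => aeval ((s : ℂ) + e * Complex.I) P)
        (((derivative P).eval s : ℝ) * Complex.I) 0 := by
      intro P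
      have h1 := (P.hasDerivAt_aeval ((s : ℂ) + (0:ℝ) * Complex.I)).comp_of_eq (0:ℝ) hl rfl
      have h2 : aeval ((s : ℂ) + (0:ℝ) * Complex.I) (derivative P)
          = (((derivative P).eval s : ℝ) : ℂ) := by
        simp only [Complex.ofReal_zero, zero_mul, add_zero]
        exact aeval_algebraMap_apply_eq_algebraMap_eval s _
      rw [h2] at h1
      exact h1
    have hv : ∀ P : ℝ[X], aeval ((s : ℂ) + (0:ℝ) * Complex.I) P = ((P.eval s : ℝ) : ℂ) := by
      intro P
      simp only [Complex.ofReal_zero, zero_mul, add_zero]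
      exact aeval_algebraMap_apply_eq_algebraMap_eval s _
    have hm := (hP G).mul ((hP F).star)
    have hi : HasDerivAt (fun e : ℝ => q ((s : ℂ) + e * Complex.I)) _ 0 :=
      Complex.imCLM.hasFDerivAt.comp_hasDerivAt (0:ℝ) hm
    have hq00 : q ((s : ℂ) + (0:ℝ) * Complex.I) = 0 := by
      simp only [q, hv]
      simp
    have hle := hi.hasDerivWithinAt (s := Set.Ioi 0)
    rw [hasDerivWithinAt_iff_tendsto_slope' (by simp)] at hle
    have := le_of_tendsto hle (b := 0) (by
      filter_upwards [self_mem_nhdsWithin] with e he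
      have he' : (0:ℝ) < e := he
      have := hqneg ((s : ℂ) + e * Complex.I) (by simpa using he')
      rw [slope_def_field, hq00]
      apply div_nonpos_of_nonpos_of_nonneg <;> linarith)
    rw [hv, hv] at this
    simp at this
    linarith
  have hWp : derivative F * G = F * derivative G := by
    apply Polynomial.funext
    intro s
    have := hWz s
    simp only [Polynomial.eval_mul]
    linarith
  have hF0 : F ≠ 0 := by
    rintro rfl
    exact hFne Complex.I (by simp) (by simp)
  obtain ⟨a, b, hab, he⟩ := aux_coprime F G hF0 hWp
  apply h a b hab Complex.I (by simp)
  have := congrArg (Polynomial.aeval Complex.I) he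
  simpa using this

end Univariate

/-- restriction to a line -/
noncomputable def lineRes {n : ℕ} (x y : Fin n → ℝ) : MvPolynomial (Fin n) ℝ →ₐ[ℝ] Polynomial ℝ :=
  MvPolynomial.aeval (fun j => Polynomial.C (x j) + Polynomial.C (y j) * Polynomial.X)

lemma lineRes_aeval {n : ℕ} (x y : Fin n → ℝ) (f : MvPolynomial (Fin n) ℝ) (t : ℂ) :
    Polynomial.aeval t (lineRes x y f)
      = MvPolynomial.eval (fun j => (x j : ℂ) + y j * t) (f.map (algebraMap ℝ ℂ)) := by
  rw [MvPolynomial.eval_map, ← MvPolynomial.aeval_def]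
  rw [← AlgHom.comp_apply]
  congr 1
  apply MvPolynomial.algHom_ext
  intro j
  simp [lineRes]

lemma lineRes_eval {n : ℕ} (x y : Fin n → ℝ) (f : MvPolynomial (Fin n) ℝ) (t : ℝ) :
    (lineRes x y f).eval t = MvPolynomial.eval (fun j => x j + y j * t) f := by
  rw [← Polynomial.coe_aeval_eq_eval, ← MvPolynomial.coe_aeval_eq_eval]
  change Polynomial.aeval t (lineRes x y f) = MvPolynomial.aeval _ f
  rw [← AlgHom.comp_apply]
  congr 1
  apply MvPolynomial.algHom_ext
  intro j
  simp [lineRes]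

lemma lineRes_deriv {n : ℕ} (x y : Fin n → ℝ) (f : MvPolynomial (Fin n) ℝ) :
    Polynomial.derivative (lineRes x y f) = lineRes x y (dirDeriv y f) := by
  induction f using MvPolynomial.induction_on with
  | C a =>
    simp [dirDeriv, lineRes]
  | add p q hp hq =>
    rw [map_add, map_add, hp, hq, ← map_add]
    simp [dirDeriv, mul_add, Finset.sum_add_distrib]
  | mul_X p i hp =>
    have : dirDeriv y (p * X i) = dirDeriv y p * X i + C (y i) * p := by
      simp [dirDeriv, Derivation.leibniz, mul_add, Finset.sum_add_distrib, Finset.sum_mul,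
        pderiv_X, Pi.single_apply]
      rw [add_comm]
      congr 1
      apply Finset.sum_congr rfl
      intros
      ring
    rw [this, map_mul, Polynomial.derivative_mul, hp, map_add, map_mul, map_mul]
    simp [lineRes]
    ring

lemma wronskian_sum {n k : ℕ} (v : Fin k → (Fin n → ℝ)) (c : Fin k → ℝ)
    (f g : MvPolynomial (Fin n) ℝ) :
    wronskian (∑ j, c j • v j) f g = ∑ j, C (c j) * wronskian (v j) f g := by
  have hd : ∀ h : MvPolynomial (Fin n) ℝ,
      dirDeriv (∑ j, c j • v j) h = ∑ j, C (c j) * dirDeriv (v j) h := by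
    intro h
    simp only [dirDeriv, Finset.sum_apply, Pi.smul_apply, smul_eq_mul, map_sum, map_mul,
      Finset.sum_mul, Finset.mul_sum]
    rw [Finset.sum_comm]
    simp only [mul_assoc]
  unfold wronskian
  rw [hd, hd, Finset.sum_mul, Finset.mul_sum, ← Finset.sum_sub_distrib]
  apply Finset.sum_congr rfl
  intros
  ring

section Scale
open scoped Pointwise

lemma interior_scale {n : ℕ} (K : Set (Fin n → ℝ)) (r : ℝ) (hr : 0 < r)
    (hK : ∀ w ∈ K, r • w ∈ K) {y : Fin n → ℝ} (hy : y ∈ interior K) : r • y ∈ interior K := by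
  have hrK : r • K ⊆ K := by
    rintro _ ⟨w, hw, rfl⟩
    exact hK w hw
  apply interior_mono hrK
  rw [interior_smul₀ hr.ne']
  exact Set.smul_mem_smul_set hy

end Scale

/-- For a polyhedral proper cone `K = cone(v⁽¹⁾,…,v⁽ᵏ⁾)`: if `λ f + μ g` is `K`-stable or
zero for all real `λ, μ` and `W_{v⁽ʲ⁾}(f,g) ≤ 0` on `ℝⁿ` for each generator, then
`g + i f` is `K`-stable. -/
theorem stmt13 {n k : ℕ} (v : Fin k → (Fin n → ℝ)) (K : Set (Fin n → ℝ))
    (hKdef : K = {x | ∃ c : Fin k → ℝ, (∀ j, 0 ≤ c j) ∧ x = ∑ j, c j • v j})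
    (hKpointed : K ∩ (-K) ⊆ {0}) (hKfull : (interior K).Nonempty)
    (f g : MvPolynomial (Fin n) ℝ) (hf : f ≠ 0) (hg : g ≠ 0)
    (hlin : ∀ lam mu : ℝ, KStable K ((lam • f + mu • g).map (algebraMap ℝ ℂ)) ∨
      lam • f + mu • g = 0)
    (hW : ∀ j : Fin k, ∀ x : Fin n → ℝ, MvPolynomial.eval x (wronskian (v j) f g) ≤ 0) :
    KStable K (g.map (algebraMap ℝ ℂ) + C Complex.I * f.map (algebraMap ℝ ℂ)) := by
  intro z hz hzero
  by_cases hprop : ∃ a b : ℝ, (a ≠ 0 ∨ b ≠ 0) ∧ a • f + b • g = 0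
  · obtain ⟨a, b, hab, he⟩ := hprop
    have hb : b ≠ 0 := by
      rintro rfl
      rcases hab with h | h
      · simp [h, hf] at he
      · exact h rfl
    have hgf : g = (-(a / b)) • f := by
      have h1 : b • g = (-a) • f := by
        rw [neg_smul]; exact eq_neg_of_add_eq_zero_right he
      calc g = b⁻¹ • (b • g) := by rw [smul_smul, inv_mul_cancel₀ hb, one_smul]
        _ = _ := by rw [h1, smul_smul]; congr 1; field_simp
    have hfs : KStable K (f.map (algebraMap ℝ ℂ)) := by
      rcases hlin 1 0 with h | h
      · simpa using h
      · simp [hf] at h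
    apply hfs z hz
    rw [hgf] at hzero
    simp only [MvPolynomial.smul_eq_C_mul, map_add, map_mul, MvPolynomial.map_C,
      MvPolynomial.eval_C, ← add_mul] at hzero
    rcases mul_eq_zero.1 hzero with h | h
    · have := congrArg Complex.im h
      simp [← Complex.ofReal_div] at this
    · exact h
  · push Not at hprop
    set x : Fin n → ℝ := fun j => (z j).re with hx
    set y : Fin n → ℝ := fun j => (z j).im with hy
    have hyI : y ∈ interior K := hz
    obtain ⟨c, hc, hyc⟩ : ∃ c : Fin k → ℝ, (∀ j, 0 ≤ c j) ∧ y = ∑ j, c j • v j := by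
      have := interior_subset hyI
      rw [hKdef] at this
      exact this
    have hscale : ∀ r : ℝ, 0 < r → r • y ∈ interior K := by
      intro r hr
      apply interior_scale K r hr _ hyI
      intro w hw
      rw [hKdef] at hw ⊢
      obtain ⟨d, hd, rfl⟩ := hw
      refine ⟨fun j => r * d j, fun j => mul_nonneg hr.le (hd j), ?_⟩
      simp [Finset.smul_sum, smul_smul]
    refine aux_uni (lineRes x y f) (lineRes x y g) ?_ ?_ ?_
    · intro a b hab t ht
      have hs := (hlin a b).resolve_right (hprop a b hab)
      have := hs (fun j => (x j : ℂ) + y j * t) (by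
        convert hscale t.im ht using 1
        funext j
        simp [mul_comm])
      rw [lineRes_aeval, lineRes_aeval]
      simpa [MvPolynomial.smul_eq_C_mul] using this
    · intro s
      rw [lineRes_deriv, lineRes_deriv, lineRes_eval, lineRes_eval, lineRes_eval, lineRes_eval]
      rw [← map_mul, ← map_mul, ← map_sub]
      change MvPolynomial.eval _ (wronskian y f g) ≤ 0
      rw [hyc, wronskian_sum, map_sum]
      apply Finset.sum_nonpos
      intro j _
      rw [map_mul, MvPolynomial.eval_C]
      exact mul_nonpos_of_nonneg_of_nonpos (hc j) (hW j _)
    · rw [lineRes_aeval, lineRes_aeval]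
      have hzz : (fun j => (x j : ℂ) + y j * Complex.I) = z := by
        funext j
        exact Complex.re_add_im (z j)
      rw [hzz]
      simpa using hzero
end
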